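/- arXiv:1608.06353 — 2 statements merged into one kernel-verified Lean document; each statement's English description precedes it below -/
import Mathlib

section
/- Let M be a topological space and ≪ a transitive binary relation on M whose graph is open in M × M and which is future-dense and past-dense. Let P ⊆ M be a past set, i.e. I⁻(P) = P, and set A := ∂P (its topological boundary) and F := M \ closure(P). Then: P is open; A is achronal (no x, y ∈ A satisfy x ≪ y); F is a future set, i.e. I⁺(F) = F; ∂F = ∂P = A; M is the disjoint union of P, A, and F; and moreover I⁻(A) ⊆ P and I⁺(A) ⊆ F. -/
/-! Because each `I⁺(x)` is open, a point that precedes a limit point of `S` already precedes a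
point of `S`, so `I⁻(closure S) = I⁻(S)`. For a past set `P` this gives `I⁻(closure P) = P`, and
future-density then makes `P` a regular open set, so that the exterior of `P` has the same boundary
as `P`. The inclusions for `I⁺` are the ones for `I⁻` read through the duality
`I⁺(S) ⊆ Tᶜ ↔ I⁻(T) ⊆ Sᶜ`. -/

/-- The timelike past of a set `S`: all points related to some point of `S`. -/
def Iminus {M : Type*} (r : M → M → Prop) (S : Set M) : Set M :=
  {x | ∃ s ∈ S, r x s}

/-- The timelike future of a set `S`: all points to which some point of `S` is related. -/
def Iplus {M : Type*} (r : M → M → Prop) (S : Set M) : Set M :=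
  {y | ∃ s ∈ S, r s y}

/-- A set is achronal (w.r.t. a relation `r`) if no two of its points are related. -/
def Achronal {M : Type*} (r : M → M → Prop) (A : Set M) : Prop :=
  ∀ x ∈ A, ∀ y ∈ A, ¬ r x y

section Relation

variable {M : Type*} {r : M → M → Prop} {S T : Set M}

theorem Iminus_mono (h : S ⊆ T) : Iminus r S ⊆ Iminus r T :=
  fun _ ⟨s, hs, hxs⟩ => ⟨s, h hs, hxs⟩

theorem Iplus_subset_compl_iff : Iplus r S ⊆ Tᶜ ↔ Iminus r T ⊆ Sᶜ :=
  ⟨fun h s ⟨_, ht, hst⟩ hs => h ⟨s, hs, hst⟩ ht, fun h t ⟨_, hs, hst⟩ ht => h ⟨t, ht, hst⟩ hs⟩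

theorem achronal_iff_Iminus_subset_compl : Achronal r S ↔ Iminus r S ⊆ Sᶜ :=
  ⟨fun h x ⟨y, hy, hxy⟩ hx => h x hx y hy hxy, fun h _ hx y hy hxy => h ⟨y, hy, hxy⟩ hx⟩

end Relation

section Topology

variable {M : Type*} [TopologicalSpace M] {r : M → M → Prop} {S U P : Set M}

theorem isOpen_Iminus (hpast : ∀ y, IsOpen {x | r x y}) : IsOpen (Iminus r S) := by
  have hunion : Iminus r S = ⋃ s ∈ S, {x | r x s} := by
    ext x
    simp [Iminus]
  rw [hunion]
  exact isOpen_biUnion fun s _ => hpast s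

theorem Iminus_closure (hfut : ∀ x, IsOpen {y | r x y}) :
    Iminus r (closure S) = Iminus r S := by
  refine Set.Subset.antisymm ?_ (Iminus_mono subset_closure)
  rintro x ⟨y, hy, hxy⟩
  obtain ⟨s, hxs, hs⟩ := mem_closure_iff.1 hy _ (hfut x) hxy
  exact ⟨s, hs, hxs⟩

theorem subset_Iminus_of_isOpen (hfd : ∀ x, x ∈ closure {y | r x y}) (hU : IsOpen U) :
    U ⊆ Iminus r U :=
  fun x hx => mem_closure_iff.1 (hfd x) U hU hx

theorem subset_Iplus_of_isOpen (hpd : ∀ x, x ∈ closure {y | r y x}) (hU : IsOpen U) :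
    U ⊆ Iplus r U :=
  subset_Iminus_of_isOpen (r := Function.swap r) hpd hU

theorem interior_closure_subset_Iminus (hfut : ∀ x, IsOpen {y | r x y})
    (hfd : ∀ x, x ∈ closure {y | r x y}) : interior (closure S) ⊆ Iminus r S :=
  calc
    interior (closure S) ⊆ Iminus r (interior (closure S)) :=
      subset_Iminus_of_isOpen hfd isOpen_interior
    _ ⊆ Iminus r (closure S) := Iminus_mono interior_subset
    _ = Iminus r S := Iminus_closure hfut

theorem Iplus_compl_closure (hfut : ∀ x, IsOpen {y | r x y})
    (hpd : ∀ x, x ∈ closure {y | r y x}) (hP : Iminus r P ⊆ closure P) :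
    Iplus r (closure P)ᶜ = (closure P)ᶜ := by
  refine Set.Subset.antisymm ?_ (subset_Iplus_of_isOpen hpd isClosed_closure.isOpen_compl)
  rwa [Iplus_subset_compl_iff, compl_compl, Iminus_closure hfut]

theorem frontier_compl_closure_of_interior_closure_eq (hU : interior (closure U) = U) :
    frontier (closure U)ᶜ = frontier U := by
  have hUo : IsOpen U := hU ▸ isOpen_interior
  rw [frontier_compl, isClosed_closure.frontier_eq, hU, hUo.frontier_eq]

theorem achronal_boundary_of_past_set_general (hfut : ∀ x, IsOpen {y | r x y})
    (hpast : ∀ y, IsOpen {x | r x y}) (hfd : ∀ x, x ∈ closure {y | r x y})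
    (hpd : ∀ x, x ∈ closure {y | r y x}) (hP : Iminus r P = P) :
    IsOpen P ∧
    Achronal r (frontier P) ∧
    Iplus r ((closure P)ᶜ) = (closure P)ᶜ ∧
    frontier ((closure P)ᶜ) = frontier P ∧
    P ∪ frontier P ∪ (closure P)ᶜ = Set.univ ∧
    Disjoint P (frontier P) ∧
    Disjoint P ((closure P)ᶜ) ∧
    Disjoint (frontier P) ((closure P)ᶜ) ∧
    Iminus r (frontier P) ⊆ P ∧
    Iplus r (frontier P) ⊆ (closure P)ᶜ := by
  have hPo : IsOpen P := hP ▸ isOpen_Iminus hpast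
  have hcl : Iminus r (closure P) = P := (Iminus_closure hfut).trans hP
  have hregular : interior (closure P) = P :=
    ((interior_closure_subset_Iminus hfut hfd).trans_eq hP).antisymm hPo.subset_interior_closure
  have hdisj : Disjoint P (frontier P) := (disjoint_frontier_iff_isOpen.2 hPo).symm
  have hpastA : Iminus r (frontier P) ⊆ P := (Iminus_mono frontier_subset_closure).trans_eq hcl
  refine ⟨hPo, ?achronal, Iplus_compl_closure hfut hpd (hP.trans_subset subset_closure),
    frontier_compl_closure_of_interior_closure_eq hregular, ?cover, hdisj,
    Set.disjoint_compl_right_iff_subset.2 subset_closure,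
    Set.disjoint_compl_right_iff_subset.2 frontier_subset_closure, hpastA, ?future⟩
  case achronal =>
    exact achronal_iff_Iminus_subset_compl.2 (hpastA.trans hdisj.subset_compl_right)
  case cover => rw [← closure_eq_self_union_frontier, Set.union_compl_self]
  case future =>
    rw [Iplus_subset_compl_iff, hcl]
    exact hdisj.subset_compl_right

end Topology

theorem achronal_boundary_of_past_set {M : Type*} [TopologicalSpace M]
    (r : M → M → Prop)
    (htrans : Transitive r)
    (hopen : IsOpen {p : M × M | r p.1 p.2})
    (hfd : ∀ x : M, x ∈ closure {y | r x y})
    (hpd : ∀ x : M, x ∈ closure {y | r y x})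
    (P : Set M) (hP : Iminus r P = P) :
    IsOpen P ∧
    Achronal r (frontier P) ∧
    Iplus r ((closure P)ᶜ) = (closure P)ᶜ ∧
    frontier ((closure P)ᶜ) = frontier P ∧
    P ∪ frontier P ∪ (closure P)ᶜ = Set.univ ∧
    Disjoint P (frontier P) ∧
    Disjoint P ((closure P)ᶜ) ∧
    Disjoint (frontier P) ((closure P)ᶜ) ∧
    Iminus r (frontier P) ⊆ P ∧
    Iplus r (frontier P) ⊆ (closure P)ᶜ :=
  achronal_boundary_of_past_set_general (fun x => hopen.preimage (Continuous.prodMk_right x))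
    (fun y => hopen.preimage (Continuous.prodMk_left y)) hfd hpd hP
end

section
/- Let M be a locally connected topological space and let (P_k)_{k∈ℕ} be an increasing sequence of open subsets of M, i.e. P_k ⊆ P_{k+1} for all k. Then the sequence of topological boundaries (∂P_k) has a Hausdorff closed limit, and this limit equals ∂(⋃_k P_k). -/
/-!
Write `P` for the union `⋃ k, P k`. A point `p ∈ ∂P` is tested on connected neighbourhoods `V`: such
a `V` meets `P`, hence meets `P k` for all large `k`, and it meets the complement of `P`, hence that
of every `P k`; being connected, it meets `∂(P k)` for all large `k`. So `∂P` lies in the lower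
limit.

Conversely, the upper limit lies in `closure P`, and it avoids the interior of `P` as soon as every
point of that interior is interior to some `P N`: the point is then interior to all later `P k`, so
that `interior (P N)` is a neighbourhood missing their boundaries.
-/

/-- The Hausdorff upper limit of a sequence of subsets. -/
def hausdorffUpperLimit {M : Type*} [TopologicalSpace M] (S : ℕ → Set M) : Set M :=
  {p | ∀ U ∈ nhds p, {k : ℕ | (U ∩ S k).Nonempty}.Infinite}

/-- The Hausdorff lower limit of a sequence of subsets. -/
def hausdorffLowerLimit {M : Type*} [TopologicalSpace M] (S : ℕ → Set M) : Set M :=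
  {p | ∀ U ∈ nhds p, {k : ℕ | ¬ (U ∩ S k).Nonempty}.Finite}

open Filter Set Topology

section

variable {M : Type*} [TopologicalSpace M] {S P : ℕ → Set M}

theorem inter_frontier_nonempty_of_isPreconnected {V s : Set M} (hV : IsPreconnected V)
    (hs : (V ∩ s).Nonempty) (hsc : (V ∩ sᶜ).Nonempty) : (V ∩ frontier s).Nonempty := by
  by_contra hempty
  have hcover : V ⊆ interior s ∪ interior sᶜ := by
    rw [← compl_frontier_eq_union_interior]
    exact fun x hxV hx => hempty ⟨x, hxV, hx⟩
  obtain ⟨x, hxV, hxs⟩ := hs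
  obtain ⟨y, hyV, hys⟩ := hsc
  have hx : x ∈ interior s := (hcover hxV).resolve_right fun h => interior_subset h hxs
  have hy : y ∈ interior sᶜ := (hcover hyV).resolve_left fun h => hys (interior_subset h)
  obtain ⟨z, -, hz, hzc⟩ :=
    hV _ _ isOpen_interior isOpen_interior hcover ⟨x, hxV, hx⟩ ⟨y, hyV, hy⟩
  exact interior_subset hzc (interior_subset hz)

theorem mem_hausdorffUpperLimit_iff_frequently {p : M} :
    p ∈ hausdorffUpperLimit S ↔ ∀ U ∈ 𝓝 p, ∃ᶠ k in atTop, (U ∩ S k).Nonempty := by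
  simp only [hausdorffUpperLimit, mem_ofPred_eq, Nat.frequently_atTop_iff_infinite]

theorem mem_hausdorffLowerLimit_iff_eventually {p : M} :
    p ∈ hausdorffLowerLimit S ↔ ∀ U ∈ 𝓝 p, ∀ᶠ k in atTop, (U ∩ S k).Nonempty := by
  simp only [hausdorffLowerLimit, mem_ofPred_eq, ← Nat.cofinite_eq_atTop, eventually_cofinite]

theorem hausdorffLowerLimit_subset_hausdorffUpperLimit (S : ℕ → Set M) :
    hausdorffLowerLimit S ⊆ hausdorffUpperLimit S := fun _ hp =>
  mem_hausdorffUpperLimit_iff_frequently.2 fun U hU =>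
    (mem_hausdorffLowerLimit_iff_eventually.1 hp U hU).frequently

theorem hausdorffUpperLimit_subset_closure_iUnion (S : ℕ → Set M) :
    hausdorffUpperLimit S ⊆ closure (⋃ k, S k) := fun _ hp =>
  mem_closure_iff_nhds.2 fun U hU =>
    let ⟨k, hk⟩ := (mem_hausdorffUpperLimit_iff_frequently.1 hp U hU).exists
    hk.mono (inter_subset_inter_right U (subset_iUnion S k))

theorem disjoint_hausdorffUpperLimit_of_eventually_disjoint {U : Set M} (hU : IsOpen U)
    (h : ∀ᶠ k in atTop, Disjoint U (S k)) : Disjoint U (hausdorffUpperLimit S) := by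
  refine disjoint_left.2 fun p hpU hp => ?_
  refine mem_hausdorffUpperLimit_iff_frequently.1 hp U (hU.mem_nhds hpU) ?_
  exact h.mono fun k hk => not_nonempty_iff_eq_empty.2 hk.inter_eq

theorem frontier_iUnion_subset_hausdorffLowerLimit [LocallyConnectedSpace M] (hP : Monotone P) :
    frontier (⋃ k, P k) ⊆ hausdorffLowerLimit fun k => frontier (P k) := by
  intro p hp
  refine mem_hausdorffLowerLimit_iff_eventually.2 fun U hU => ?_
  obtain ⟨V, hVp, hVconn, hVU⟩ :=
    locallyConnectedSpace_iff_connected_subsets.1 inferInstance p U hU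
  rw [frontier_eq_closure_inter_closure] at hp
  obtain ⟨x, hxV, hx⟩ := mem_closure_iff_nhds.1 hp.1 V hVp
  obtain ⟨N, hxN⟩ := mem_iUnion.1 hx
  have hcompl : (V ∩ (⋃ k, P k)ᶜ).Nonempty := mem_closure_iff_nhds.1 hp.2 V hVp
  filter_upwards [eventually_ge_atTop N] with k hk
  have hmeets : (V ∩ P k).Nonempty := ⟨x, hxV, hP hk hxN⟩
  have hmeets_compl : (V ∩ (P k)ᶜ).Nonempty :=
    hcompl.mono (inter_subset_inter_right V (compl_subset_compl.2 (subset_iUnion P k)))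
  exact (inter_frontier_nonempty_of_isPreconnected hVconn hmeets hmeets_compl).mono
    (inter_subset_inter_left _ hVU)

theorem hausdorffUpperLimit_frontier_subset_closure_iUnion (P : ℕ → Set M) :
    (hausdorffUpperLimit fun k => frontier (P k)) ⊆ closure (⋃ k, P k) :=
  (hausdorffUpperLimit_subset_closure_iUnion _).trans <|
    closure_minimal (iUnion_subset fun k =>
      frontier_subset_closure.trans (closure_mono (subset_iUnion P k))) isClosed_closure

theorem disjoint_iUnion_interior_hausdorffUpperLimit_frontier (hP : Monotone P) :
    Disjoint (⋃ k, interior (P k)) (hausdorffUpperLimit fun k => frontier (P k)) := by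
  refine disjoint_iUnion_left.2 fun N =>
    disjoint_hausdorffUpperLimit_of_eventually_disjoint isOpen_interior ?_
  filter_upwards [eventually_ge_atTop N] with k hk
  exact disjoint_interior_frontier.mono_left (interior_mono (hP hk))

theorem hausdorffUpperLimit_frontier_subset_frontier_iUnion (hP : Monotone P)
    (hint : interior (⋃ k, P k) ⊆ ⋃ k, interior (P k)) :
    (hausdorffUpperLimit fun k => frontier (P k)) ⊆ frontier (⋃ k, P k) := fun _ hp =>
  ⟨hausdorffUpperLimit_frontier_subset_closure_iUnion P hp, fun hpint =>
    disjoint_left.1 (disjoint_iUnion_interior_hausdorffUpperLimit_frontier hP) (hint hpint) hp⟩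

end

theorem hausdorffLimit_frontiers_of_increasing_open_general {M : Type*} [TopologicalSpace M]
    [LocallyConnectedSpace M] {P : ℕ → Set M} (hP : Monotone P)
    (hint : interior (⋃ k, P k) ⊆ ⋃ k, interior (P k)) :
    hausdorffUpperLimit (fun k => frontier (P k)) = frontier (⋃ k, P k) ∧
    hausdorffLowerLimit (fun k => frontier (P k)) = frontier (⋃ k, P k) := by
  have hlower := frontier_iUnion_subset_hausdorffLowerLimit hP
  have hle := hausdorffLowerLimit_subset_hausdorffUpperLimit fun k => frontier (P k)
  have hupper := hausdorffUpperLimit_frontier_subset_frontier_iUnion hP hint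
  exact ⟨hupper.antisymm (hlower.trans hle), (hle.trans hupper).antisymm hlower⟩

theorem hausdorffLimit_frontiers_of_increasing_open {M : Type*} [TopologicalSpace M]
    [LocallyConnectedSpace M]
    (P : ℕ → Set M) (hopen : ∀ k, IsOpen (P k)) (hmono : ∀ k, P k ⊆ P (k + 1)) :
    hausdorffUpperLimit (fun k => frontier (P k)) = frontier (⋃ k, P k) ∧
    hausdorffLowerLimit (fun k => frontier (P k)) = frontier (⋃ k, P k) :=
  hausdorffLimit_frontiers_of_increasing_open_general (monotone_nat_of_le_succ hmono) <|
    interior_subset.trans (iUnion_mono fun k => (hopen k).interior_eq.superset)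
end
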